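/- arXiv:2411.03508 — 2 statements merged into one kernel-verified Lean document; each statement's English description precedes it below -/
import Mathlib

section
/- A K-point P = (a,c) of the affine curve y^d = f(x) is a torsion point of order exactly n (that is, n is the least positive integer m such that m_P^m is a principal ideal of A) if and only if there exists a polynomial v ∈ K[X] with d·deg(v) ≤ n − 1 such that f(X) = (X − a)^n + v(X)^d. -/
open Polynomial

/-- The affine coordinate ring `A = K[X,Y]/(Y^d − f(X))` of the curve `y^d = f(x)`,
realized as `AdjoinRoot` of the polynomial `Y^d - f(X)` over `K[X]`. -/
noncomputable abbrev CurveRing (K : Type*) [Field K] (d : ℕ) (f : K[X]) : Type _ :=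
  AdjoinRoot ((X : K[X][X]) ^ d - C f)

/-- The maximal ideal `m_{(a,c)} = (X - a, Y - c)` of the coordinate ring. -/
noncomputable def ptIdeal {K : Type*} [Field K] (d : ℕ) (f : K[X]) (a c : K) :
    Ideal (CurveRing K d f) :=
  Ideal.span {AdjoinRoot.of _ (X - C a), AdjoinRoot.root _ - AdjoinRoot.of _ (C c)}

/-- `P = (a,c)` is a torsion point of order `m` on the Jacobian: `m` is the least
positive integer such that `m_P ^ m` is a principal ideal of `A`. -/
def IsTorsionOfOrder {K : Type*} [Field K] (d : ℕ) (f : K[X]) (a c : K) (m : ℕ) : Prop :=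
  IsLeast {k : ℕ | 0 < k ∧ (ptIdeal d f a c ^ k).IsPrincipal} m

/-!
Write `A` for the coordinate ring and `m` for the ideal of the point `(a, c)`. Since `n` and `d` are
coprime, the terms of a reduced expression `g = ∑ i < d, gᵢ(x) y ^ i` have distinct pole orders
`d * deg gᵢ + n * i` at infinity, and the largest of them is `deg (Norm g) = dim A / (g)`.

Assume `c ≠ 0`. Newton's method gives polynomials `w` with `w(a) = c` and `w ^ d` arbitrarily close
to `f` at `a`, whence `m ^ k = (y - w, (x - a) ^ k)` and `dim A / m ^ k ≤ k`. A generator `g` of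
`m ^ k` therefore has pole order at most `k`. It cannot be a polynomial in `x`, for such a function
would vanish on the whole fibre over `x = a`; hence `n ≤ k`. When `k = n` only `g₀` and a constant
`g₁` can occur, so `m ^ n = (y - v)` with `d * deg v < n`, and `(x - a) ^ n ∈ (y - v)` means that
`f - v ^ d` divides `(x - a) ^ n`; both are monic of degree `n`. Conversely, after `v` is scaled by
a `d`-th root of unity so that `v(a) = c`, the identity `f = (x - a) ^ n + v ^ d` gives
`m ^ n = (y - v, (x - a) ^ n) = (y - v)`. If `c = 0`, then already `m ^ d = (x - a)`.
-/

/-! ### The degree of a determinant with a dominant permutation -/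

theorem degree_sum_eq_of_forall_lt {R ι : Type*} [Semiring R] {s : Finset ι} {p : ι → R[X]} {i : ι}
    (hi : i ∈ s) (h0 : p i ≠ 0) (hlt : ∀ j ∈ s, j ≠ i → (p j).degree < (p i).degree) :
    (∑ j ∈ s, p j).degree = (p i).degree := by
  classical
  rw [← Finset.add_sum_erase s p hi]
  refine degree_add_eq_left_of_degree_lt ((degree_sum_le _ _).trans_lt ?_)
  exact (Finset.sup_lt_iff (bot_lt_iff_ne_bot.2 (degree_ne_bot.2 h0))).2 fun j hj =>
    hlt j (Finset.mem_of_mem_erase hj) (Finset.ne_of_mem_erase hj)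

theorem degree_det_eq_of_forall_lt {R ι : Type*} [CommRing R] [Fintype ι] [DecidableEq ι]
    {M : Matrix ι ι R[X]} {σ : Equiv.Perm ι} (h0 : ∏ i, M (σ i) i ≠ 0)
    (hlt : ∀ τ ≠ σ, (∏ i, M (τ i) i).degree < (∏ i, M (σ i) i).degree) :
    M.det.degree = (∏ i, M (σ i) i).degree := by
  have degree_sign_smul (τ : Equiv.Perm ι) (p : R[X]) :
      (Equiv.Perm.sign τ • p).degree = p.degree := by
    rcases Int.units_eq_one_or (Equiv.Perm.sign τ) with h | h <;> simp [h, Units.smul_def]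
  rw [Matrix.det_apply, degree_sum_eq_of_forall_lt (Finset.mem_univ σ) _ fun τ _ hτ => ?_,
    degree_sign_smul]
  · rwa [← degree_ne_bot, degree_sign_smul, degree_ne_bot]
  · rw [degree_sign_smul, degree_sign_smul]
    exact hlt τ hτ

namespace CurveRing

variable {K : Type*} [Field K] {d : ℕ} {f : K[X]}

theorem root_pow : AdjoinRoot.root ((X : K[X][X]) ^ d - C f) ^ d = AdjoinRoot.of _ f := by
  simpa [sub_eq_zero] using AdjoinRoot.eval₂_root ((X : K[X][X]) ^ d - C f)

/-- The ring homomorphism out of the coordinate ring given by the images `φ X` and `y` of the two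
coordinate functions. -/
noncomputable def lift {B : Type*} [CommRing B] (φ : K[X] →+* B) (y : B) (h : y ^ d = φ f) :
    CurveRing K d f →+* B :=
  AdjoinRoot.lift φ y (by simp [h])

section Lift

variable {B : Type*} [CommRing B] (φ : K[X] →+* B) (y : B) (h : y ^ d = φ f)

@[simp]
theorem lift_of (p : K[X]) : lift φ y h (AdjoinRoot.of _ p) = φ p :=
  AdjoinRoot.lift_of _

@[simp]
theorem lift_root : lift φ y h (AdjoinRoot.root _) = y :=
  AdjoinRoot.lift_root _

end Lift

/-! ### The pole order at infinity -/

/-- The pole order at infinity of the monomial function `p(x) y ^ i`: the coordinate functions `x`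
and `y` have poles of orders `d` and `deg f` there. -/
noncomputable def termPoleOrder (d : ℕ) (f p : K[X]) (i : ℕ) : ℕ :=
  d * p.natDegree + f.natDegree * i

theorem termPoleOrder_injective (hcop : f.natDegree.Coprime d) {p q : K[X]} {i j : Fin d}
    (h : termPoleOrder d f p i = termPoleOrder d f q j) : i = j := by
  have hmod : f.natDegree * i ≡ f.natDegree * j [MOD d] := by
    simpa [Nat.ModEq, termPoleOrder] using congrArg (· % d) h
  exact Fin.ext <| (hmod.cancel_left_of_coprime hcop.symm).eq_of_lt_of_lt i.2 j.2

/-- The factor by which the product of `y ^ i` and `y ^ j` differs from the basis element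
`y ^ ((i + j) % d)`. -/
noncomputable def wrapFactor (f : K[X]) (i j : Fin d) : K[X] :=
  if (i : ℕ) + j < d then 1 else f

theorem wrapFactor_ne_zero (hf : f ≠ 0) (i j : Fin d) : wrapFactor f i j ≠ 0 := by
  unfold wrapFactor
  split_ifs <;> simp [hf]

theorem mul_natDegree_wrapFactor_add (i j : Fin d) :
    d * (wrapFactor f i j).natDegree + f.natDegree * (i + j : Fin d) =
      f.natDegree * i + f.natDegree * j := by
  rw [wrapFactor, Fin.val_add_eq_ite]
  split_ifs with h₁ h₂ h₂
  · omega
  · simp [mul_add]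
  · rw [← mul_add, mul_comm d, ← mul_add]
    congr 1
    omega
  · omega

section PoleOrder

variable [NeZero d]

variable (K d f) in
/-- The basis `1, y, …, y ^ (d - 1)` of the coordinate ring over `K[X]`, indexed by `Fin d` so that
indices are added modulo `d`. -/
noncomputable def basis : Module.Basis (Fin d) K[X] (CurveRing K d f) :=
  (AdjoinRoot.powerBasis' (monic_X_pow_sub_C f (NeZero.ne d))).basis.reindex
    (finCongr natDegree_X_pow_sub_C)

theorem basis_apply (i : Fin d) : basis K d f i = AdjoinRoot.root _ ^ (i : ℕ) := by
  rw [basis, Module.Basis.reindex_apply, PowerBasis.basis_eq_pow]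
  rfl

theorem sum_of_repr_mul_root_pow (g : CurveRing K d f) :
    ∑ i, AdjoinRoot.of _ ((basis K d f).repr g i) * AdjoinRoot.root _ ^ (i : ℕ) = g := by
  simpa [basis_apply, Algebra.smul_def] using (basis K d f).sum_repr g

theorem basis_mul_basis (i j : Fin d) :
    basis K d f i * basis K d f j = wrapFactor f i j • basis K d f (i + j) := by
  rw [basis_apply, basis_apply, basis_apply, ← pow_add, wrapFactor, Fin.val_add_eq_ite]
  split_ifs with h₁ h₂ h₂
  · omega
  · simp
  · rw [Algebra.smul_def, AdjoinRoot.algebraMap_eq, ← root_pow, ← pow_add]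
    congr 1
    omega
  · omega

theorem leftMulMatrix_basis_apply (g : CurveRing K d f) (i j : Fin d) :
    Algebra.leftMulMatrix (basis K d f) g i j =
      (basis K d f).repr g (i - j) * wrapFactor f (i - j) j := by
  rw [Algebra.leftMulMatrix_eq_repr_mul]
  conv_lhs => rw [← (basis K d f).sum_repr g, Finset.sum_mul]
  simp only [smul_mul_assoc, basis_mul_basis, map_sum, map_smul, Module.Basis.repr_self,
    Finsupp.coe_finsetSum, Finset.sum_apply, Finsupp.smul_apply, smul_eq_mul]
  rw [Finset.sum_eq_single (i - j)]
  · simp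
  · intro l _ hl
    rw [Finsupp.single_eq_of_ne (by rintro rfl; simp at hl)]
    simp
  · simp

/-- The pole order at infinity of a regular function, read off its reduced expression
`∑ i < d, gᵢ(x) y ^ i`; it is `0` for the zero function. -/
noncomputable def poleOrder (g : CurveRing K d f) : ℕ :=
  ((basis K d f).repr g).support.sup fun i => termPoleOrder d f ((basis K d f).repr g i) i

theorem termPoleOrder_le_poleOrder {g : CurveRing K d f} {i : Fin d}
    (hi : (basis K d f).repr g i ≠ 0) :
    termPoleOrder d f ((basis K d f).repr g i) i ≤ poleOrder g :=
  Finset.le_sup (f := fun i => termPoleOrder d f ((basis K d f).repr g i) i)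
    (Finsupp.mem_support_iff.2 hi)

theorem exists_poleOrder_eq_and_forall_lt (hcop : f.natDegree.Coprime d) {g : CurveRing K d f}
    (hg : g ≠ 0) :
    ∃ i, (basis K d f).repr g i ≠ 0 ∧ termPoleOrder d f ((basis K d f).repr g i) i = poleOrder g ∧
      ∀ j ≠ i, (basis K d f).repr g j ≠ 0 →
        termPoleOrder d f ((basis K d f).repr g j) j < poleOrder g := by
  have hsupp : ((basis K d f).repr g).support.Nonempty := by simpa using hg
  obtain ⟨i, hi, hsup⟩ := Finset.exists_mem_eq_sup _ hsupp
    fun i => termPoleOrder d f ((basis K d f).repr g i) i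
  refine ⟨i, Finsupp.mem_support_iff.1 hi, hsup.symm, fun j hji hj => ?_⟩
  exact (termPoleOrder_le_poleOrder hj).lt_of_ne fun h =>
    hji (termPoleOrder_injective hcop (h.trans hsup))

theorem mul_natDegree_leftMulMatrix_add (hf : f ≠ 0) {g : CurveRing K d f} {i j : Fin d}
    (h : (basis K d f).repr g (i - j) ≠ 0) :
    d * (Algebra.leftMulMatrix (basis K d f) g i j).natDegree + f.natDegree * i =
      termPoleOrder d f ((basis K d f).repr g (i - j)) (i - j : Fin d) + f.natDegree * j := by
  have hdeg := mul_natDegree_wrapFactor_add (f := f) (i - j) j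
  rw [sub_add_cancel] at hdeg
  rw [leftMulMatrix_basis_apply, natDegree_mul h (wrapFactor_ne_zero hf _ _), termPoleOrder]
  linarith

theorem prod_leftMulMatrix_ne_zero_iff (hf : f ≠ 0) {g : CurveRing K d f}
    {σ : Equiv.Perm (Fin d)} :
    ∏ j, Algebra.leftMulMatrix (basis K d f) g (σ j) j ≠ 0 ↔
      ∀ j, (basis K d f).repr g (σ j - j) ≠ 0 := by
  simp only [Finset.prod_ne_zero_iff, leftMulMatrix_basis_apply, Finset.mem_univ, true_imp_iff,
    mul_ne_zero_iff, wrapFactor_ne_zero hf, and_true, ne_eq, not_false_eq_true]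

theorem mul_natDegree_prod_leftMulMatrix (hf : f ≠ 0) {g : CurveRing K d f}
    {σ : Equiv.Perm (Fin d)} (h : ∀ j, (basis K d f).repr g (σ j - j) ≠ 0) :
    d * (∏ j, Algebra.leftMulMatrix (basis K d f) g (σ j) j).natDegree =
      ∑ j, termPoleOrder d f ((basis K d f).repr g (σ j - j)) (σ j - j : Fin d) := by
  have hsum := Finset.sum_congr rfl fun j (_ : j ∈ Finset.univ) =>
    mul_natDegree_leftMulMatrix_add hf (h j)
  rw [Finset.sum_add_distrib, Finset.sum_add_distrib, ← Finset.mul_sum,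
    Equiv.sum_comp σ fun j => f.natDegree * (j : ℕ)] at hsum
  rw [natDegree_prod _ _ (Finset.prod_ne_zero_iff.1 ((prod_leftMulMatrix_ne_zero_iff hf).2 h))]
  exact Nat.add_right_cancel hsum

/- Distinct terms of `g` have distinct pole orders, so the Leibniz expansion of the norm is
dominated by the product that meets only the leading term of `g`. -/
theorem degree_norm (hcop : f.natDegree.Coprime d) (hf : f ≠ 0) {g : CurveRing K d f}
    (hg : g ≠ 0) : (Algebra.norm K[X] g).degree = poleOrder g := by
  obtain ⟨i₀, hi₀, hmax, hlt⟩ := exists_poleOrder_eq_and_forall_lt hcop hg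
  let σ : Equiv.Perm (Fin d) := Equiv.addRight i₀
  have hσ_sub (j : Fin d) : σ j - j = i₀ := add_sub_cancel_left j i₀
  have hσ : ∀ j, (basis K d f).repr g (σ j - j) ≠ 0 := fun j => by rwa [hσ_sub]
  have hσ_prod := (prod_leftMulMatrix_ne_zero_iff hf).2 hσ
  have hσ_deg : d * (∏ j, Algebra.leftMulMatrix (basis K d f) g (σ j) j).natDegree =
      ∑ _ : Fin d, poleOrder g := by
    simp only [mul_natDegree_prod_leftMulMatrix hf hσ, hσ_sub, hmax]
  have hσ_dominant (τ : Equiv.Perm (Fin d)) (hτ : τ ≠ σ) :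
      (∏ j, Algebra.leftMulMatrix (basis K d f) g (τ j) j).degree <
        (∏ j, Algebra.leftMulMatrix (basis K d f) g (σ j) j).degree := by
    by_cases h : ∏ j, Algebra.leftMulMatrix (basis K d f) g (τ j) j = 0
    · rwa [h, degree_zero, bot_lt_iff_ne_bot, degree_ne_bot]
    have hτ_repr := (prod_leftMulMatrix_ne_zero_iff hf).1 h
    obtain ⟨j, hj⟩ := DFunLike.ne_iff.1 hτ
    have hj' : τ j - j ≠ i₀ := fun h => hj (by rw [← hσ_sub j] at h; exact sub_left_injective h)
    refine degree_lt_degree (lt_of_mul_lt_mul_left' (a := d) ?_)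
    rw [hσ_deg, mul_natDegree_prod_leftMulMatrix hf hτ_repr]
    exact Finset.sum_lt_sum (fun j _ => termPoleOrder_le_poleOrder (hτ_repr j))
      ⟨j, Finset.mem_univ j, hlt _ hj' (hτ_repr j)⟩
  rw [Algebra.norm_eq_matrix_det (basis K d f), degree_det_eq_of_forall_lt hσ_prod hσ_dominant,
    degree_eq_natDegree hσ_prod]
  exact congrArg _ (Nat.eq_of_mul_eq_mul_left (NeZero.pos d) (by simpa using hσ_deg))

theorem natDegree_norm (hcop : f.natDegree.Coprime d) (hf : f ≠ 0) {g : CurveRing K d f}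
    (hg : g ≠ 0) : (Algebra.norm K[X] g).natDegree = poleOrder g :=
  natDegree_eq_of_degree_eq_some (degree_norm hcop hf hg)

theorem isDomain (hcop : f.natDegree.Coprime d) (hf : f ≠ 0) : IsDomain (CurveRing K d f) := by
  have hnorm {g : CurveRing K d f} (hg : g ≠ 0) : Algebra.norm K[X] g ≠ 0 := by
    rw [← degree_ne_bot, degree_norm hcop hf hg]
    exact WithBot.coe_ne_bot
  have := Module.Free.of_basis (basis K d f)
  have := Module.Finite.of_basis (basis K d f)
  have : Nontrivial (CurveRing K d f) := ⟨_, 0, (basis K d f).ne_zero 0⟩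
  have : NoZeroDivisors (CurveRing K d f) := by
    refine ⟨fun {g h} hgh => ?_⟩
    by_contra! hne
    refine mul_ne_zero (hnorm hne.1) (hnorm hne.2) ?_
    rw [← map_mul, hgh, Algebra.norm_zero]
  exact NoZeroDivisors.to_isDomain _

theorem finrank_quotient_span_singleton (hcop : f.natDegree.Coprime d) (hf : f ≠ 0)
    {g : CurveRing K d f} (hg : g ≠ 0) :
    Module.finrank K (CurveRing K d f ⧸ Ideal.span {g}) = poleOrder g := by
  have := isDomain hcop hf
  rw [finrank_quotient_span_eq_natDegree_norm (basis K d f) hg, natDegree_norm hcop hf hg]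

end PoleOrder
end CurveRing

/-! ### Polynomials close to a `d`-th power -/

theorem eval_ne_zero_of_squarefree_X_sub_C_pow_add_pow {R : Type*} [CommRing R] [Nontrivial R]
    {a : R} {v : R[X]} {m n : ℕ} (hm : 2 ≤ m) (hn : 2 ≤ n)
    (h : Squarefree ((X - C a) ^ m + v ^ n)) : v.eval a ≠ 0 := by
  intro hv
  have hdvd : X - C a ∣ v := dvd_iff_isRoot.2 hv
  refine not_isUnit_X_sub_C a (h _ ?_)
  rw [← sq]
  exact dvd_add (pow_dvd_pow _ hm) ((pow_dvd_pow_of_dvd hdvd 2).trans (pow_dvd_pow v hn))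

theorem exists_eval_eq_and_pow_eq {K : Type*} [Field K] {a c : K} {v : K[X]} {d : ℕ}
    (hv : v.eval a ≠ 0) (hc : c ^ d = v.eval a ^ d) : ∃ w : K[X], w.eval a = c ∧ w ^ d = v ^ d := by
  refine ⟨C (c / v.eval a) * v, by simp [hv], ?_⟩
  rw [mul_pow, ← C_pow, div_pow, hc, div_self (pow_ne_zero d hv), C_1, one_mul]

theorem isNilpotent_mk_X_sub_C_pow_iff {K : Type*} [Field K] {a : K} {k : ℕ} (hk : k ≠ 0)
    {p : K[X]} :
    IsNilpotent (Ideal.Quotient.mk (Ideal.span {(X - C a) ^ k}) p) ↔ p.eval a = 0 := by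
  simp only [IsNilpotent, ← map_pow, Ideal.Quotient.eq_zero_iff_mem, Ideal.mem_span_singleton]
  rw [← IsRoot.def, ← dvd_iff_isRoot]
  refine ⟨fun ⟨m, hm⟩ => ?_, fun h => ⟨k, pow_dvd_pow_of_dvd h k⟩⟩
  exact (prime_X_sub_C a).dvd_of_dvd_pow ((dvd_pow_self _ hk).trans hm)

theorem exists_eval_eq_and_X_sub_C_pow_dvd_sub_pow {K : Type*} [Field K] {d : ℕ} {f : K[X]}
    {a c : K} (hP : c ^ d = f.eval a) (hc : c ≠ 0) (hd : (d : K) ≠ 0) (k : ℕ) :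
    ∃ w : K[X], w.eval a = c ∧ (X - C a) ^ k ∣ f - w ^ d := by
  let π := Ideal.Quotient.mk (Ideal.span {(X - C a) ^ (k + 1)})
  let P : K[X][X] := X ^ d - C f
  have isNilpotent_aeval : IsNilpotent (aeval (π (C c)) P) := by
    have : aeval (π (C c)) P = π (C c ^ d - f) := by simp [P, π]
    rw [this, isNilpotent_mk_X_sub_C_pow_iff k.succ_ne_zero]
    simp [hP]
  have isUnit_aeval_derivative : IsUnit (aeval (π (C c)) (derivative P)) := by
    have : aeval (π (C c)) (derivative P) = π (C (d * c ^ (d - 1))) := by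
      simp [P, π, derivative_X_pow]
    rw [this]
    exact ((hd.isUnit.mul (hc.isUnit.pow _)).map C).map π
  obtain ⟨r, ⟨hr, hr_root⟩, -⟩ :=
    existsUnique_nilpotent_sub_and_aeval_eq_zero isNilpotent_aeval isUnit_aeval_derivative
  obtain ⟨w, rfl⟩ := Ideal.Quotient.mk_surjective r
  rw [← map_sub, isNilpotent_mk_X_sub_C_pow_iff k.succ_ne_zero, eval_sub, eval_C,
    sub_eq_zero] at hr
  have hw : π (w ^ d - f) = 0 := by simpa [P, π] using hr_root
  rw [Ideal.Quotient.eq_zero_iff_mem, Ideal.mem_span_singleton, dvd_sub_comm] at hw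
  exact ⟨w, hr.symm, (pow_dvd_pow _ k.le_succ).trans hw⟩

/-! ### Powers of the ideal of a point -/

theorem span_pair_pow_le {R : Type*} [CommRing R] (s t : R) (k : ℕ) :
    Ideal.span {s, t} ^ k ≤ Ideal.span {s, t ^ k} := by
  induction k with
  | zero => simpa using (Ideal.eq_top_iff_one _).2 (Ideal.subset_span (by simp))
  | succ k ih =>
    rw [pow_succ]
    refine (Ideal.mul_mono_left ih).trans ?_
    rw [Ideal.span_pair_mul_span_pair, Ideal.span_le]
    have hs : s ∈ Ideal.span {s, t ^ (k + 1)} := Ideal.subset_span (by simp)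
    rintro z (rfl | rfl | rfl | rfl)
    · exact Ideal.mul_mem_left _ _ hs
    · exact Ideal.mul_mem_right _ _ hs
    · exact Ideal.mul_mem_left _ _ hs
    · exact Ideal.subset_span (by simp [pow_succ])

namespace CurveRing

variable {K : Type*} [Field K] {d : ℕ} {f : K[X]}

theorem exists_root_sub_of_dvd_sub_of (w : K[X]) (g : CurveRing K d f) :
    ∃ p : K[X], AdjoinRoot.root _ - AdjoinRoot.of _ w ∣ g - AdjoinRoot.of _ p := by
  obtain ⟨q, rfl⟩ := AdjoinRoot.mk_surjective g
  exact ⟨q.eval w, by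
    simpa only [map_sub, AdjoinRoot.mk_X, AdjoinRoot.mk_C] using
      _root_.map_dvd (AdjoinRoot.mk _) (X_sub_C_dvd_sub_C_eval (a := w) (p := q))⟩

theorem root_sub_of_mul_geom_sum (w : K[X]) :
    (AdjoinRoot.root ((X : K[X][X]) ^ d - C f) - AdjoinRoot.of _ w) *
        ∑ i ∈ Finset.range d, AdjoinRoot.root _ ^ i * AdjoinRoot.of _ w ^ (d - 1 - i) =
      AdjoinRoot.of _ (f - w ^ d) := by
  rw [(Commute.all _ _).mul_geom_sum₂, root_pow, ← map_pow, ← map_sub]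

theorem root_sub_of_dvd_of_sub_pow (w : K[X]) :
    AdjoinRoot.root ((X : K[X][X]) ^ d - C f) - AdjoinRoot.of _ w ∣ AdjoinRoot.of _ (f - w ^ d) :=
  ⟨_, (root_sub_of_mul_geom_sum w).symm⟩

/- The quotient `A / (y - v)` is `K[X] / (f - v ^ d)`. -/
theorem sub_pow_dvd_of_root_sub_of_dvd {v q : K[X]}
    (h : AdjoinRoot.root ((X : K[X][X]) ^ d - C f) - AdjoinRoot.of _ v ∣ AdjoinRoot.of _ q) :
    f - v ^ d ∣ q := by
  let π := Ideal.Quotient.mk (Ideal.span {f - v ^ d})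
  have hπ : π v ^ d = π f := by
    rw [← map_pow, eq_comm, ← sub_eq_zero, ← map_sub]
    exact Ideal.Quotient.eq_zero_iff_mem.2 (Ideal.mem_span_singleton_self _)
  have := map_dvd (lift π (π v) hπ) h
  rwa [map_sub, lift_root, lift_of, lift_of, sub_self, zero_dvd_iff,
    Ideal.Quotient.eq_zero_iff_mem, Ideal.mem_span_singleton] at this

section Point

variable {a c : K} (hP : c ^ d = f.eval a)

/-- Evaluation of regular functions at the point `(a, c)`. -/
noncomputable def evalAt : CurveRing K d f →+* K :=
  lift (evalRingHom a) c hP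

@[simp]
theorem evalAt_of (p : K[X]) : evalAt hP (AdjoinRoot.of _ p) = p.eval a :=
  lift_of _ _ _ _

@[simp]
theorem evalAt_root : evalAt hP (AdjoinRoot.root _) = c :=
  lift_root _ _ _

theorem ker_evalAt : RingHom.ker (evalAt hP) = ptIdeal d f a c := by
  apply le_antisymm
  · intro g hg
    obtain ⟨p, q, hpq⟩ := exists_root_sub_of_dvd_sub_of (C c) g
    obtain rfl := sub_eq_iff_eq_add.1 hpq
    have hp : X - C a ∣ p := by simpa [dvd_iff_isRoot] using hg
    refine add_mem (Ideal.mul_mem_right _ _ (Ideal.subset_span (by simp))) ?_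
    exact Ideal.mem_of_dvd _ (map_dvd _ hp) (Ideal.subset_span (by simp))
  · rw [ptIdeal, Ideal.span_le]
    rintro _ (rfl | rfl) <;> simp [RingHom.mem_ker]

include hP in
theorem isMaximal_ptIdeal : (ptIdeal d f a c).IsMaximal := by
  rw [← ker_evalAt hP]
  exact RingHom.ker_isMaximal_of_surjective _ fun b => ⟨AdjoinRoot.of _ (C b), by simp⟩

theorem ptIdeal_pow_le_ker_evalAt {k : ℕ} (hk : k ≠ 0) :
    ptIdeal d f a c ^ k ≤ RingHom.ker (evalAt hP) :=
  (Ideal.pow_le_self hk).trans (ker_evalAt hP).ge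

theorem ptIdeal_eq_span_of_eval_eq {w : K[X]} (hw : w.eval a = c) :
    ptIdeal d f a c =
      Ideal.span {AdjoinRoot.root _ - AdjoinRoot.of _ w, AdjoinRoot.of _ (X - C a)} := by
  obtain ⟨q, hq⟩ := X_sub_C_dvd_sub_C_eval (a := a) (p := w)
  rw [hw] at hq
  rw [ptIdeal, Set.pair_comm,
    ← Ideal.span_pair_add_mul_right (AdjoinRoot.root _ - AdjoinRoot.of _ w) _ (AdjoinRoot.of _ q),
    ← map_mul, mul_comm q, ← hq, map_sub _ w, sub_add_sub_cancel]

/- Away from `c = 0` the cofactor of `y - w` in `f - w ^ d` is a unit at the point, so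
`y - w` vanishes there to the same order as `f - w ^ d`. -/
include hP in
theorem ptIdeal_pow_eq_span (hc : c ≠ 0) (hd : (d : K) ≠ 0) {w : K[X]} (hw : w.eval a = c) {k : ℕ}
    (hdvd : (X - C a) ^ k ∣ f - w ^ d) :
    ptIdeal d f a c ^ k =
      Ideal.span {AdjoinRoot.root _ - AdjoinRoot.of _ w, AdjoinRoot.of _ (X - C a) ^ k} := by
  have := isMaximal_ptIdeal hP
  have x_sub_mem : AdjoinRoot.of _ (X - C a) ∈ ptIdeal d f a c := Ideal.subset_span (by simp)
  apply le_antisymm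
  · rw [ptIdeal_eq_span_of_eval_eq hw]
    exact span_pair_pow_le _ _ _
  rw [Ideal.span_le]
  rintro _ (rfl | rfl)
  · have hmem : AdjoinRoot.of _ (f - w ^ d) ∈ ptIdeal d f a c ^ k :=
      Ideal.mem_of_dvd _ (map_dvd _ hdvd) (by simpa using Ideal.pow_mem_pow x_sub_mem k)
    rw [← root_sub_of_mul_geom_sum, mul_comm] at hmem
    refine (Ideal.IsMaximal.mul_mem_pow _ hmem).resolve_left ?_
    rw [← ker_evalAt hP, RingHom.mem_ker]
    simp [hw, geom_sum₂_self, hc, hd]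
  · exact Ideal.pow_mem_pow x_sub_mem k

include hP in
theorem finrank_quotient_ptIdeal_pow_le (hc : c ≠ 0) (hd : (d : K) ≠ 0) (k : ℕ) :
    Module.finrank K (CurveRing K d f ⧸ ptIdeal d f a c ^ k) ≤ k := by
  obtain ⟨w, hw, hdvd⟩ := exists_eval_eq_and_X_sub_C_pow_dvd_sub_pow hP hc hd k
  rw [ptIdeal_pow_eq_span hP hc hd hw hdvd]
  set I : Ideal (CurveRing K d f) :=
    Ideal.span {AdjoinRoot.root _ - AdjoinRoot.of _ w, AdjoinRoot.of _ (X - C a) ^ k}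
  let φ : K[X] →ₐ[K] CurveRing K d f ⧸ I :=
    (Ideal.Quotient.mkₐ K I).comp (Algebra.ofId K[X] (CurveRing K d f) |>.restrictScalars K)
  have hφ (p : K[X]) : φ p = Ideal.Quotient.mk I (AdjoinRoot.of _ p) := rfl
  let ψ := Ideal.Quotient.liftₐ (Ideal.span {(X - C a) ^ k}) φ fun p hp => by
    rw [hφ, Ideal.Quotient.eq_zero_iff_mem]
    refine Ideal.mem_of_dvd _ (map_dvd _ (Ideal.mem_span_singleton.1 hp)) ?_
    rw [map_pow]
    exact Ideal.subset_span (by simp)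
  have hψ : Function.Surjective ψ.toLinearMap := by
    intro g
    obtain ⟨g, rfl⟩ := Ideal.Quotient.mk_surjective g
    obtain ⟨p, hp⟩ := exists_root_sub_of_dvd_sub_of w g
    refine ⟨Ideal.Quotient.mk _ p, (Ideal.Quotient.eq.2 ?_).symm⟩
    exact Ideal.mem_of_dvd _ hp (Ideal.subset_span (by simp))
  have := ((monic_X_sub_C a).pow k).finite_quotient
  calc _ ≤ _ := LinearMap.finrank_le_finrank_of_surjective hψ
    _ = k := by simp [finrank_quotient_span_eq_natDegree]

/- The fibre over `x = a` consists of `d` distinct geometric points, so a function of `x` alone that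
vanishes at `(a, c)` also vanishes at another point. -/
include hP in
theorem ptIdeal_pow_ne_span_of (hc : c ≠ 0) (hdK : (d : K) ≠ 0) (hd : 2 ≤ d) {k : ℕ} (hk : k ≠ 0)
    (p : K[X]) : ptIdeal d f a c ^ k ≠ Ideal.span {AdjoinRoot.of _ p} := by
  intro h
  have hp : p.eval a = 0 := by
    have := ptIdeal_pow_le_ker_evalAt hP hk (h ▸ Ideal.mem_span_singleton_self _)
    rwa [RingHom.mem_ker, evalAt_of] at this
  have hdvd : AdjoinRoot.of ((X : K[X][X]) ^ d - C f) p ∣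
      (AdjoinRoot.root _ - AdjoinRoot.of _ (C c)) ^ k := by
    rw [← Ideal.mem_span_singleton, ← h]
    exact Ideal.pow_mem_pow (Ideal.subset_span (by simp)) k
  let P : K[X] := X ^ d - C (c ^ d)
  have hroot : AdjoinRoot.root P ^ d = ((AdjoinRoot.of P).comp (evalRingHom a)) f := by
    rw [RingHom.comp_apply, coe_evalRingHom, ← hP, ← sub_eq_zero]
    simpa only [P, eval₂_sub, eval₂_X_pow, eval₂_C] using AdjoinRoot.eval₂_root P
  have hP_dvd_pow : P ∣ (X - C c) ^ k := by
    rw [← AdjoinRoot.mk_eq_zero]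
    simpa [hp] using _root_.map_dvd (lift _ _ hroot) hdvd
  have hP_dvd : P ∣ X - C c :=
    ((separable_X_pow_sub_C _ hdK (pow_ne_zero d hc)).squarefree.dvd_pow_iff_dvd hk).1 hP_dvd_pow
  have hdeg := natDegree_le_of_dvd hP_dvd (X_sub_C_ne_zero c)
  rw [natDegree_X_pow_sub_C, natDegree_X_sub_C] at hdeg
  omega

theorem ptIdeal_pow_eq_span_of_eq_X_sub_C_pow_add_pow (hc : c ≠ 0) (hd : (d : K) ≠ 0) {v : K[X]}
    (hv : v.eval a = c) {k : ℕ} (hk : k ≠ 0) (hf : f = (X - C a) ^ k + v ^ d) :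
    ptIdeal d f a c ^ k = Ideal.span {AdjoinRoot.root _ - AdjoinRoot.of _ v} := by
  have hsub : f - v ^ d = (X - C a) ^ k := sub_eq_of_eq_add hf
  have hP : c ^ d = f.eval a := by simp [hf, hv, hk]
  rw [ptIdeal_pow_eq_span hP hc hd hv hsub.symm.dvd, Ideal.span_pair_eq_span_left_iff_dvd,
    ← map_pow, ← hsub]
  exact root_sub_of_dvd_of_sub_pow v

theorem ptIdeal_zero_pow_eq_span (hd : d ≠ 0) (ha : f.eval a = 0) (hsqf : Squarefree f) :
    ptIdeal d f a 0 ^ d = Ideal.span {AdjoinRoot.of _ (X - C a)} := by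
  have hP : 0 ^ d = f.eval a := by rw [ha, zero_pow hd]
  have := isMaximal_ptIdeal hP
  have hm : ptIdeal d f a 0 = Ideal.span {AdjoinRoot.of _ (X - C a), AdjoinRoot.root _} := by
    simp [ptIdeal]
  obtain ⟨q, hq⟩ := dvd_iff_isRoot.2 ha
  have hqa : q.eval a ≠ 0 := fun h => not_isUnit_X_sub_C a <|
    hsqf _ (hq ▸ mul_dvd_mul_left _ (dvd_iff_isRoot.2 h))
  apply le_antisymm
  · rw [hm]
    refine (span_pair_pow_le _ _ _).trans_eq (Ideal.span_pair_eq_span_left_iff_dvd.2 ?_)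
    rw [root_pow]
    exact _root_.map_dvd _ ⟨q, hq⟩
  · rw [Ideal.span_singleton_le_iff_mem]
    have hmem : AdjoinRoot.of _ q * AdjoinRoot.of _ (X - C a) ∈ ptIdeal d f a 0 ^ d := by
      rw [← map_mul, mul_comm, ← hq, ← root_pow]
      exact Ideal.pow_mem_pow (hm ▸ Ideal.subset_span (by simp)) d
    refine (Ideal.IsMaximal.mul_mem_pow _ hmem).resolve_left ?_
    rwa [← ker_evalAt hP, RingHom.mem_ker, evalAt_of]

end Point

/-! ### Functions of small pole order -/

theorem natDegree_le_poleOrder [NeZero d] {g : CurveRing K d f}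
    (hg : ∀ p : K[X], g ≠ AdjoinRoot.of _ p) : f.natDegree ≤ poleOrder g := by
  obtain ⟨i, hi, hgi⟩ : ∃ i ≠ 0, (basis K d f).repr g i ≠ 0 := by
    by_contra! h
    refine hg ((basis K d f).repr g 0) ?_
    conv_lhs => rw [← sum_of_repr_mul_root_pow g]
    rw [Fintype.sum_eq_single 0 fun i hi => by simp [h i hi]]
    simp
  calc f.natDegree ≤ f.natDegree * i :=
        Nat.le_mul_of_pos_right _ (Nat.pos_of_ne_zero (by simpa using hi))
    _ ≤ termPoleOrder d f ((basis K d f).repr g i) i := Nat.le_add_left _ _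
    _ ≤ poleOrder g := termPoleOrder_le_poleOrder hgi

theorem exists_eq_of_add_of_C_mul_root [NeZero d] (hd : 2 ≤ d) (hf : 0 < f.natDegree)
    {g : CurveRing K d f} (hg : poleOrder g ≤ f.natDegree) :
    ∃ (q : K[X]) (β : K), d * q.natDegree ≤ f.natDegree ∧
      g = AdjoinRoot.of _ q + AdjoinRoot.of _ (C β) * AdjoinRoot.root _ := by
  let r : Fin d → K[X] := (basis K d f).repr g
  have hr (i : Fin d) (hi : r i ≠ 0) : d * (r i).natDegree + f.natDegree * i ≤ f.natDegree :=
    (termPoleOrder_le_poleOrder hi).trans hg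
  let i₁ : Fin d := ⟨1, hd⟩
  have hr_zero : d * (r 0).natDegree ≤ f.natDegree := by
    by_cases h : r 0 = 0
    · simp [h]
    · simpa using hr 0 h
  have hr_one : (r i₁).natDegree = 0 := by
    by_cases h : r i₁ = 0
    · simp [h]
    · simpa [i₁, NeZero.ne d] using hr i₁ h
  have hr_of_two_le (i : Fin d) (hi : 2 ≤ (i : ℕ)) : r i = 0 := by
    by_contra h
    nlinarith [hr i h]
  refine ⟨r 0, (r i₁).coeff 0, hr_zero, ?_⟩
  conv_lhs => rw [← sum_of_repr_mul_root_pow g]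
  rw [Fintype.sum_eq_add 0 i₁ (by simp [i₁, Fin.ext_iff]), ← eq_C_of_natDegree_eq_zero hr_one]
  · simp [r, i₁]
  · rintro i ⟨hi₀, hi₁⟩
    have hi : 2 ≤ (i : ℕ) := by
      simp only [ne_eq, Fin.ext_iff, Fin.val_zero, i₁] at hi₀ hi₁
      omega
    change AdjoinRoot.of _ (r i) * _ = 0
    rw [hr_of_two_le i hi, map_zero, zero_mul]

section Principal

variable {a c : K} (hcop : f.natDegree.Coprime d) (hd : 2 ≤ d) (hP : c ^ d = f.eval a)
  (hc : c ≠ 0) (hdK : (d : K) ≠ 0)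

include hcop hd hP hc hdK

theorem poleOrder_le_of_ptIdeal_pow_eq_span [NeZero d] {k : ℕ} (hk : k ≠ 0)
    {g : CurveRing K d f} (h : ptIdeal d f a c ^ k = Ideal.span {g}) : poleOrder g ≤ k := by
  have hf : f ≠ 0 := by
    rintro rfl
    exact pow_ne_zero d hc (by simpa using hP)
  have hg : g ≠ 0 := by
    rintro rfl
    exact ptIdeal_pow_ne_span_of hP hc hdK hd hk 0 (by simpa using h)
  rw [← finrank_quotient_span_singleton hcop hf hg, ← h]
  exact finrank_quotient_ptIdeal_pow_le hP hc hdK k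

theorem natDegree_le_of_isPrincipal_ptIdeal_pow {k : ℕ} (hk : k ≠ 0)
    (h : (ptIdeal d f a c ^ k).IsPrincipal) : f.natDegree ≤ k := by
  have : NeZero d := ⟨by omega⟩
  obtain ⟨g, hg⟩ := h
  refine (natDegree_le_poleOrder ?_).trans
    (poleOrder_le_of_ptIdeal_pow_eq_span hcop hd hP hc hdK hk hg)
  rintro p rfl
  exact ptIdeal_pow_ne_span_of hP hc hdK hd hk p hg

theorem exists_ptIdeal_pow_natDegree_eq_span
    (h : (ptIdeal d f a c ^ f.natDegree).IsPrincipal) :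
    ∃ v : K[X], d * v.natDegree < f.natDegree ∧
      ptIdeal d f a c ^ f.natDegree =
        Ideal.span {AdjoinRoot.root _ - AdjoinRoot.of _ v} := by
  have : NeZero d := ⟨by omega⟩
  have hf : 0 < f.natDegree := by
    by_contra! hf
    rw [Nat.le_zero.1 hf, Nat.coprime_zero_left] at hcop
    omega
  obtain ⟨g, hg⟩ := h
  obtain ⟨q, β, hq, rfl⟩ := exists_eq_of_add_of_C_mul_root hd hf
    (poleOrder_le_of_ptIdeal_pow_eq_span hcop hd hP hc hdK hf.ne' hg)
  have hβ : β ≠ 0 := by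
    rintro rfl
    exact ptIdeal_pow_ne_span_of hP hc hdK hd hf.ne' q (by simpa using hg)
  have hq_ne : d * q.natDegree ≠ f.natDegree := fun h =>
    absurd (hcop.symm.eq_one_of_dvd ⟨_, h.symm⟩) (by omega)
  refine ⟨C (-β⁻¹) * q, ?_, hg.trans ?_⟩
  · rw [natDegree_C_mul (by simpa using hβ)]
    exact hq.lt_of_ne hq_ne
  · have hunit : IsUnit (AdjoinRoot.of ((X : K[X][X]) ^ d - C f) (C β)) :=
      (hβ.isUnit.map C).map _
    rw [← Ideal.span_singleton_mul_left_unit hunit, mul_sub, ← map_mul, ← mul_assoc, ← C_mul,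
      mul_neg, mul_inv_cancel₀ hβ]
    simp [add_comm]

theorem exists_eq_X_sub_C_pow_add_pow (hmonic : f.Monic)
    (h : (ptIdeal d f a c ^ f.natDegree).IsPrincipal) :
    ∃ v : K[X], d * v.natDegree < f.natDegree ∧ f = (X - C a) ^ f.natDegree + v ^ d := by
  obtain ⟨v, hv, hspan⟩ := exists_ptIdeal_pow_natDegree_eq_span hcop hd hP hc hdK h
  refine ⟨v, hv, eq_add_of_sub_eq ?_⟩
  have hdvd : f - v ^ d ∣ (X - C a) ^ f.natDegree := by
    refine sub_pow_dvd_of_root_sub_of_dvd ?_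
    rw [← Ideal.mem_span_singleton, ← hspan, map_pow]
    exact Ideal.pow_mem_pow (Ideal.subset_span (by simp)) _
  have hdeg : (v ^ d).degree < f.degree := degree_lt_degree (by rwa [natDegree_pow])
  refine (eq_of_monic_of_dvd_of_natDegree_le (hmonic.sub_of_left hdeg)
    ((monic_X_sub_C a).pow _) hdvd ?_).symm
  rw [natDegree_pow, natDegree_X_sub_C, mul_one, natDegree_eq_of_degree_eq
    (degree_sub_eq_left_of_degree_lt hdeg)]

end Principal
end CurveRing

theorem stmt_2_general {K : Type*} [Field K] (d n : ℕ)
    (hd : 2 ≤ d) (hdn : d < n) (hgcd : Nat.gcd n d = 1)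
    (hchar : ¬ (ringChar K ∣ d))
    (f : K[X]) (hmonic : f.Monic) (hdeg : f.natDegree = n) (hsqf : Squarefree f)
    (a c : K) (hP : c ^ d = f.eval a) :
    IsTorsionOfOrder d f a c n ↔
      ∃ v : K[X], d * v.natDegree ≤ n - 1 ∧ f = (X - C a) ^ n + v ^ d := by
  have hdK : (d : K) ≠ 0 := fun h => hchar ((ringChar.spec K d).1 h)
  have hd₀ : d ≠ 0 := by omega
  have hn₀ : n ≠ 0 := by omega
  constructor
  · subst hdeg
    rintro ⟨⟨-, hprincipal⟩, hleast⟩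
    have hc : c ≠ 0 := by
      rintro rfl
      have hspan := CurveRing.ptIdeal_zero_pow_eq_span hd₀ (by rw [← hP, zero_pow hd₀]) hsqf
      exact hdn.not_ge (hleast ⟨hd₀.bot_lt, _, hspan⟩)
    obtain ⟨v, hv, hfv⟩ :=
      CurveRing.exists_eq_X_sub_C_pow_add_pow hgcd hd hP hc hdK hmonic hprincipal
    exact ⟨v, Nat.le_sub_one_of_lt hv, hfv⟩
  · rintro ⟨v, -, hfv⟩
    have hva : v.eval a ≠ 0 :=
      eval_ne_zero_of_squarefree_X_sub_C_pow_add_pow (hd.trans hdn.le) hd (hfv ▸ hsqf)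
    have hcv : c ^ d = v.eval a ^ d := by simp [hP, hfv, hn₀]
    have hc : c ≠ 0 := (pow_ne_zero_iff hd₀).1 (hcv ▸ pow_ne_zero d hva)
    obtain ⟨w, hwa, hwv⟩ := exists_eval_eq_and_pow_eq hva hcv
    have hspan := CurveRing.ptIdeal_pow_eq_span_of_eq_X_sub_C_pow_add_pow hc hdK hwa hn₀
      (hwv ▸ hfv)
    exact ⟨⟨hn₀.bot_lt, _, hspan⟩, fun k hk => hdeg ▸
      CurveRing.natDegree_le_of_isPrincipal_ptIdeal_pow (hdeg ▸ hgcd) hd hP hc hdK hk.1.ne' hk.2⟩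

theorem stmt_2 {K : Type*} [Field K] [IsAlgClosed K] (d n : ℕ)
    (hd : 2 ≤ d) (hdn : d < n) (hgcd : Nat.gcd n d = 1)
    (hchar : ¬ (ringChar K ∣ d))
    (f : K[X]) (hmonic : f.Monic) (hdeg : f.natDegree = n) (hsqf : Squarefree f)
    (hDed : IsDedekindDomain (CurveRing K d f))
    (a c : K) (hP : c ^ d = f.eval a) :
    IsTorsionOfOrder d f a c n ↔
      ∃ v : K[X], d * v.natDegree ≤ n - 1 ∧ f = (X - C a) ^ n + v ^ d :=
  stmt_2_general d n hd hdn hgcd hchar f hmonic hdeg hsqf a c hP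
end

section
/- Let P = (a,c) be a K-point of the affine curve y^d = f(x) which is a torsion point of order m (i.e., m is the least positive integer with m_P^m principal), where 1 < m ≤ n and d does not divide m. Then m = n, and there exists a polynomial v ∈ K[X] with d·deg(v) ≤ n − 1 such that m_P^n is the principal ideal of A generated by the image of Y − v(X). -/
open Polynomial

/-!
`A` is free over `K[X]` on `1, Y, …, Y ^ (d - 1)`, and in these coordinates multiplication by
`g = ∑ pᵢ Y ^ i` is a twisted circulant matrix: going once around multiplies the entries by `f`.
Since `deg f` and `d` are coprime, the pole orders `d deg pᵢ + i deg f` of the terms are distinct,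
so in the determinant the cyclic shift by the index of the largest one dominates all other
permutations; hence `dim A ⧸ (g) = deg N(g) = max (d deg pᵢ + i deg f)`. If `m_P ^ m = (g)`, this
number is `dim A ⧸ m_P ^ m = m`. As `m ≤ deg f` and `d ∤ m`, the largest term can only be `p₁ Y`
with `p₁` constant, which forces `m = deg f`, `pᵢ = 0` for `i ≥ 2` and `d deg p₀ < deg f`.
-/

section Determinant

theorem degree_det_eq_of_dominant {ι R : Type*} [Fintype ι] [DecidableEq ι] [CommRing R]
    {M : Matrix ι ι R[X]} {σ : Equiv.Perm ι}
    (hσ : ∀ τ ≠ σ, (∏ j, M (τ j) j).degree < (∏ j, M (σ j) j).degree) :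
    M.det.degree = (∏ j, M (σ j) j).degree := by
  have degree_sign_smul (τ : Equiv.Perm ι) (p : R[X]) : (τ.sign • p).degree = p.degree := by
    obtain h | h := Int.units_eq_one_or τ.sign <;> simp [h]
  rw [M.det_apply, ← Finset.add_sum_erase _ _ (Finset.mem_univ σ)]
  obtain hσ_unique | ⟨τ₀, hτ₀⟩ := (Finset.univ.erase σ).eq_empty_or_nonempty
  · rw [hσ_unique, Finset.sum_empty, add_zero, degree_sign_smul]
  have hlt : (∑ τ ∈ Finset.univ.erase σ, τ.sign • ∏ j, M (τ j) j).degree <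
      (∏ j, M (σ j) j).degree := by
    refine (degree_sum_le _ _).trans_lt ((Finset.sup_lt_iff ?_).2 fun τ hτ ↦ ?_)
    · exact bot_le.trans_lt (hσ τ₀ (Finset.ne_of_mem_erase hτ₀))
    · exact (degree_sign_smul τ _).trans_lt (hσ τ (Finset.ne_of_mem_erase hτ))
  rw [degree_add_eq_left_of_degree_lt (hlt.trans_eq (degree_sign_smul σ _).symm),
    degree_sign_smul]

end Determinant

section RootPow

variable {R : Type*} [CommRing R]

theorem root_pow_sub_mul {d : ℕ} (r : R) (j k : Fin d) :
    AdjoinRoot.root ((X : R[X]) ^ d - C r) ^ ((k - j : Fin d) : ℕ) * AdjoinRoot.root _ ^ (j : ℕ) =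
      (if j ≤ k then 1 else r) • AdjoinRoot.root _ ^ (k : ℕ) := by
  have hroot : AdjoinRoot.root ((X : R[X]) ^ d - C r) ^ d = algebraMap R _ r := by
    simpa [sub_eq_zero] using AdjoinRoot.eval₂_root ((X : R[X]) ^ d - C r)
  rw [← pow_add]
  split_ifs with h
  · rw [Fin.coe_sub_iff_le.2 h, Nat.sub_add_cancel (Fin.le_def.1 h), one_smul]
  · have : d + k - j + j = d + k := by omega
    rw [Fin.coe_sub_iff_lt.2 (not_le.1 h), this, pow_add, hroot, Algebra.smul_def]

variable [Nontrivial R]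

/-- The `R`-basis `1, y, …, y ^ (d - 1)` of `R[y]`, where `y ^ d = r`. -/
noncomputable def rootPowBasis (d : ℕ) [NeZero d] (r : R) :
    Module.Basis (Fin d) R (AdjoinRoot ((X : R[X]) ^ d - C r)) :=
  (AdjoinRoot.powerBasis' (monic_X_pow_sub_C r (NeZero.ne d))).basis.reindex
    (finCongr natDegree_X_pow_sub_C)

variable {d : ℕ} [NeZero d]

theorem rootPowBasis_apply (r : R) (i : Fin d) :
    rootPowBasis d r i = AdjoinRoot.root _ ^ (i : ℕ) := by
  rw [rootPowBasis, Module.Basis.reindex_apply, PowerBasis.basis_eq_pow]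
  rfl

theorem leftMulMatrix_rootPowBasis (r : R) (g : AdjoinRoot ((X : R[X]) ^ d - C r))
    (k j : Fin d) :
    Algebra.leftMulMatrix (rootPowBasis d r) g k j =
      (rootPowBasis d r).repr g (k - j) * if j ≤ k then 1 else r := by
  have hmul : g * rootPowBasis d r j = ∑ l,
      ((rootPowBasis d r).repr g (l - j) * if j ≤ l then 1 else r) • rootPowBasis d r l := by
    conv_lhs => rw [← (rootPowBasis d r).sum_repr g]
    rw [← (Equiv.subRight j).sum_comp, Finset.sum_mul]
    refine Finset.sum_congr rfl fun l _ ↦ ?_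
    rw [Equiv.subRight_apply, smul_mul_assoc, rootPowBasis_apply, rootPowBasis_apply,
      root_pow_sub_mul, smul_smul, rootPowBasis_apply]
  rw [Algebra.leftMulMatrix_eq_repr_mul, hmul, Module.Basis.repr_sum_self]

end RootPow

section PrimePowers
open Ideal
variable {S : Type*} [CommRing S] {P : Ideal S}

/-- Multiplication by an element `a` of `P ^ k`, as a map from `S ⧸ P` to `S ⧸ P ^ (k + 1)`. -/
def quotientMulLeft (P : Ideal S) {k : ℕ} {a : S} (ha : a ∈ P ^ k) :
    S ⧸ P →ₗ[S] S ⧸ P ^ (k + 1) :=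
  Submodule.mapQ P (P ^ (k + 1)) (LinearMap.mulLeft S a) fun _ hx ↦ by
    simpa only [Submodule.mem_comap, LinearMap.mulLeft_apply, pow_succ] using mul_mem_mul ha hx

variable [IsDedekindDomain S] [P.IsPrime]

theorem quotientMulLeft_injective (hP : P ≠ ⊥) {k : ℕ} {a : S} (ha : a ∈ P ^ k)
    (ha' : a ∉ P ^ (k + 1)) : Function.Injective (quotientMulLeft P ha) := by
  refine (injective_iff_map_eq_zero _).2 fun x hx ↦ ?_
  obtain ⟨x, rfl⟩ := Submodule.Quotient.mk_surjective P x
  have hax : a * x ∈ P ^ (k + 1) := (Submodule.Quotient.mk_eq_zero _).1 hx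
  exact (Submodule.Quotient.mk_eq_zero _).2 (mem_prime_of_mul_mem_pow hP ha' hax)

theorem exact_quotientMulLeft_factor (hP : P ≠ ⊥) {k : ℕ} {a : S} (ha : a ∈ P ^ k)
    (ha' : a ∉ P ^ (k + 1)) :
    Function.Exact (quotientMulLeft P ha) (Submodule.factor (pow_le_pow_right k.le_succ)) := by
  intro x
  obtain ⟨x, rfl⟩ := Submodule.Quotient.mk_surjective _ x
  refine (Submodule.Quotient.mk_eq_zero (P ^ k)).trans ⟨fun hx ↦ ?_, ?_⟩
  · obtain ⟨b, e, he, hbe⟩ := exists_mul_add_mem_pow_succ hP a x ha ha' hx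
    refine ⟨Submodule.Quotient.mk b, (Submodule.Quotient.eq _).2 ?_⟩
    simpa only [← hbe, LinearMap.mulLeft_apply, sub_add_cancel_left, neg_mem_iff] using he
  · rintro ⟨b, hb⟩
    obtain ⟨b, rfl⟩ := Submodule.Quotient.mk_surjective _ b
    have hab : a * b - x ∈ P ^ (k + 1) := (Submodule.Quotient.eq _).1 hb
    simpa using sub_mem (mul_mem_right b _ ha) (pow_le_pow_right k.le_succ hab)

theorem length_quotient_prime_pow (R : Type*) [CommRing R] [Algebra R S] (hP : P ≠ ⊥) (k : ℕ) :
    Module.length R (S ⧸ P ^ k) = k * Module.length R (S ⧸ P) := by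
  induction k with
  | zero =>
    have : Subsingleton (S ⧸ P ^ 0) := Ideal.Quotient.subsingleton_iff.2 (by simp)
    simp [Module.length_eq_zero]
  | succ k ih =>
    obtain ⟨a, ha, ha'⟩ := SetLike.exists_of_lt (pow_succ_lt_pow hP k)
    have hle : P ^ (k + 1) ≤ P ^ k := pow_le_pow_right k.le_succ
    have hlen := Module.length_eq_add_of_exact ((quotientMulLeft P ha).restrictScalars R)
      ((Submodule.factor hle).restrictScalars R) (quotientMulLeft_injective hP ha ha')
      (Submodule.factor_surjective hle)
      (exact_quotientMulLeft_factor hP ha ha')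
    rw [hlen, ih, Nat.cast_succ, add_mul, one_mul, add_comm]

end PrimePowers

section PoleOrder

variable {K : Type*} [Field K] {d : ℕ} [NeZero d] {f : K[X]}

/-- The order of the pole at infinity of the `i`-th term `p X * Y ^ i` of `g` when `deg f` is
coprime to `d`: the functions `X` and `Y` have poles of order `d` and `deg f` there. A vanishing
term gets the junk value `deg f * i`. -/
noncomputable def termOrder (g : CurveRing K d f) (i : Fin d) : ℕ :=
  d * ((rootPowBasis d f).repr g i).natDegree + f.natDegree * i

/-- The order of the pole of `g` at infinity when `deg f` is coprime to `d`, as the largest order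
of a nonzero term of `g`; the junk value at `g = 0` is `0`. -/
noncomputable def poleOrder (g : CurveRing K d f) : ℕ :=
  ((rootPowBasis d f).repr g).support.sup (termOrder g)

theorem termOrder_le_poleOrder {g : CurveRing K d f} {i : Fin d}
    (hi : (rootPowBasis d f).repr g i ≠ 0) : termOrder g i ≤ poleOrder g :=
  Finset.le_sup (f := termOrder g) (Finsupp.mem_support_iff.2 hi)

theorem exists_termOrder_eq_poleOrder {g : CurveRing K d f} (hg : g ≠ 0) :
    ∃ i, (rootPowBasis d f).repr g i ≠ 0 ∧ termOrder g i = poleOrder g := by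
  obtain ⟨i, hi, hmax⟩ := Finset.exists_mem_eq_sup ((rootPowBasis d f).repr g).support
    (by simpa using hg) (termOrder g)
  exact ⟨i, Finsupp.mem_support_iff.1 hi, hmax.symm⟩

theorem termOrder_injective (hcop : f.natDegree.Coprime d) (g : CurveRing K d f) :
    Function.Injective (termOrder g) := by
  intro i j hij
  have hmod : f.natDegree * i ≡ f.natDegree * j [MOD d] := by
    have := congrArg (· % d) hij
    simpa only [termOrder, Nat.mul_add_mod, Nat.ModEq] using this
  have hij' := Nat.ModEq.cancel_left_of_coprime hcop.symm hmod
  exact Fin.ext (hij'.eq_of_lt_of_lt i.isLt j.isLt)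

theorem natDegree_leftMulMatrix_rootPowBasis {g : CurveRing K d f} {k j : Fin d}
    (h : Algebra.leftMulMatrix (rootPowBasis d f) g k j ≠ 0) :
    d * (Algebra.leftMulMatrix (rootPowBasis d f) g k j).natDegree + f.natDegree * k =
      termOrder g (k - j) + f.natDegree * j := by
  rw [leftMulMatrix_rootPowBasis] at h ⊢
  rw [natDegree_mul (left_ne_zero_of_mul h) (right_ne_zero_of_mul h), termOrder]
  split_ifs with hjk
  · have : (k : ℕ) = (k - j) + j := (Nat.sub_add_cancel hjk).symm
    rw [Fin.coe_sub_iff_le.2 hjk, natDegree_one, add_zero, add_assoc, ← mul_add, ← this]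
  · have : d + k = (d + k - j) + j := by omega
    rw [Fin.coe_sub_iff_lt.2 (not_le.1 hjk), add_assoc, ← mul_add, ← this]
    ring

theorem natDegree_prod_leftMulMatrix_rootPowBasis {g : CurveRing K d f} {τ : Equiv.Perm (Fin d)}
    (h : ∏ j, Algebra.leftMulMatrix (rootPowBasis d f) g (τ j) j ≠ 0) :
    d * (∏ j, Algebra.leftMulMatrix (rootPowBasis d f) g (τ j) j).natDegree =
      ∑ j, termOrder g (τ j - j) := by
  have hne := fun j ↦ Finset.prod_ne_zero_iff.1 h j (Finset.mem_univ j)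
  have hsum := Finset.sum_congr rfl fun j (_ : j ∈ Finset.univ) ↦
    natDegree_leftMulMatrix_rootPowBasis (hne j)
  rw [Finset.sum_add_distrib, Finset.sum_add_distrib,
    Equiv.sum_comp τ fun j : Fin d ↦ f.natDegree * (j : ℕ)] at hsum
  rw [natDegree_prod _ _ fun j _ ↦ hne j, Finset.mul_sum]
  exact Nat.add_right_cancel hsum

theorem prod_leftMulMatrix_addLeft_ne_zero (hf : f ≠ 0) {g : CurveRing K d f} {i : Fin d}
    (hi : (rootPowBasis d f).repr g i ≠ 0) :
    ∏ j, Algebra.leftMulMatrix (rootPowBasis d f) g (Equiv.addLeft i j) j ≠ 0 :=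
  Finset.prod_ne_zero_iff.2 fun j _ ↦ by
    rw [leftMulMatrix_rootPowBasis]
    split_ifs <;> simp [hf, hi]

theorem natDegree_prod_leftMulMatrix_addLeft (hf : f ≠ 0) {g : CurveRing K d f} {i : Fin d}
    (hi : (rootPowBasis d f).repr g i ≠ 0) :
    (∏ j, Algebra.leftMulMatrix (rootPowBasis d f) g (Equiv.addLeft i j) j).natDegree =
      termOrder g i := by
  have hdeg := natDegree_prod_leftMulMatrix_rootPowBasis (prod_leftMulMatrix_addLeft_ne_zero hf hi)
  simp only [Equiv.coe_addLeft, add_sub_cancel_right, Finset.sum_const, Finset.card_univ,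
    Fintype.card_fin, smul_eq_mul] at hdeg ⊢
  exact Nat.eq_of_mul_eq_mul_left (NeZero.pos d) hdeg

theorem natDegree_prod_leftMulMatrix_lt_poleOrder (hcop : f.natDegree.Coprime d)
    {g : CurveRing K d f} {i : Fin d} (hi : termOrder g i = poleOrder g) {τ : Equiv.Perm (Fin d)}
    (hτ : τ ≠ Equiv.addLeft i) (h : ∏ j, Algebra.leftMulMatrix (rootPowBasis d f) g (τ j) j ≠ 0) :
    (∏ j, Algebra.leftMulMatrix (rootPowBasis d f) g (τ j) j).natDegree < poleOrder g := by
  have hle (j : Fin d) : termOrder g (τ j - j) ≤ poleOrder g := by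
    have hentry := Finset.prod_ne_zero_iff.1 h j (Finset.mem_univ j)
    rw [leftMulMatrix_rootPowBasis] at hentry
    exact termOrder_le_poleOrder (left_ne_zero_of_mul hentry)
  obtain ⟨j₀, hj₀⟩ := not_forall.1 fun h ↦ hτ (Equiv.ext h)
  have hlt : termOrder g (τ j₀ - j₀) < poleOrder g := (hle j₀).lt_of_ne fun heq ↦
    hj₀ (sub_eq_iff_eq_add.1 (termOrder_injective hcop g (heq.trans hi.symm)))
  refine Nat.lt_of_mul_lt_mul_left (a := d) ?_
  rw [natDegree_prod_leftMulMatrix_rootPowBasis h]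
  simpa using Finset.sum_lt_sum (fun j _ ↦ hle j) ⟨j₀, Finset.mem_univ j₀, hlt⟩

theorem natDegree_norm_eq_poleOrder (hcop : f.natDegree.Coprime d) (hf : f ≠ 0)
    {g : CurveRing K d f} (hg : g ≠ 0) : (Algebra.norm K[X] g).natDegree = poleOrder g := by
  obtain ⟨i, hi, hmax⟩ := exists_termOrder_eq_poleOrder hg
  have hshift_ne := prod_leftMulMatrix_addLeft_ne_zero hf hi
  have hshift := natDegree_prod_leftMulMatrix_addLeft hf hi
  rw [Algebra.norm_eq_matrix_det (rootPowBasis d f), ← hmax, ← hshift]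
  refine natDegree_eq_of_degree_eq (degree_det_eq_of_dominant (σ := Equiv.addLeft i) fun τ hτ ↦ ?_)
  by_cases hτ_prod : ∏ j, Algebra.leftMulMatrix (rootPowBasis d f) g (τ j) j = 0
  · rwa [hτ_prod, degree_zero, bot_lt_iff_ne_bot, Ne, degree_eq_bot]
  · refine degree_lt_degree ?_
    simpa only [hshift, hmax] using
      natDegree_prod_leftMulMatrix_lt_poleOrder hcop hmax hτ hτ_prod

end PoleOrder

section PointIdeal

variable {K : Type*} [Field K] {d : ℕ} {f : K[X]} {a c : K}

/-- Evaluation of functions on the curve at the point `(a, c)`. -/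
noncomputable def evalAt (hP : c ^ d = f.eval a) : CurveRing K d f →ₐ[K] K :=
  AdjoinRoot.liftAlgHom _ (aeval a) c (by simp [hP])

theorem ker_evalAt (hP : c ^ d = f.eval a) : RingHom.ker (evalAt hP) = ptIdeal d f a c := by
  refine le_antisymm (fun g hg ↦ ?_) (Ideal.span_le.2 ?_)
  · have hcomp : Ideal.Quotient.mkₐ K (ptIdeal d f a c) =
        (Algebra.ofId K (CurveRing K d f ⧸ ptIdeal d f a c)).comp (evalAt hP) := by
      have halg (x : K) : algebraMap K (CurveRing K d f) x = AdjoinRoot.of _ (C x) := rfl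
      refine AdjoinRoot.algHom_ext' (Polynomial.algHom_ext ?_) ?_ <;>
        refine Ideal.Quotient.eq.2 (Ideal.subset_span ?_) <;> simp [evalAt, halg]
    rw [← Ideal.Quotient.eq_zero_iff_mem]
    simpa [RingHom.mem_ker.1 hg] using DFunLike.congr_fun hcomp g
  · simp [evalAt, Set.insert_subset_iff, RingHom.mem_ker]

theorem evalAt_surjective (hP : c ^ d = f.eval a) : Function.Surjective (evalAt hP) :=
  fun x ↦ ⟨algebraMap K _ x, by simp⟩

theorem isMaximal_ptIdeal (hP : c ^ d = f.eval a) : (ptIdeal d f a c).IsMaximal := by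
  rw [← ker_evalAt hP]
  exact RingHom.ker_isMaximal_of_surjective _ (evalAt_surjective hP)

theorem ptIdeal_ne_bot [NeZero d] : ptIdeal d f a c ≠ ⊥ := by
  have hof : Function.Injective (AdjoinRoot.of ((X : K[X][X]) ^ d - C f)) :=
    AdjoinRoot.of.injective_of_degree_ne_zero <| by
      rw [degree_X_pow_sub_C (NeZero.pos d)]
      exact_mod_cast NeZero.ne d
  refine Submodule.ne_bot_iff _ |>.2 ⟨_, Ideal.subset_span (Set.mem_insert _ _), ?_⟩
  exact (map_ne_zero_iff _ hof).2 (X_sub_C_ne_zero a)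

theorem finrank_quotient_ptIdeal_pow [NeZero d] [IsDedekindDomain (CurveRing K d f)]
    (hP : c ^ d = f.eval a) (m : ℕ) :
    Module.finrank K (CurveRing K d f ⧸ ptIdeal d f a c ^ m) = m := by
  have := (isMaximal_ptIdeal hP).isPrime
  have hpt : Module.length K (CurveRing K d f ⧸ ptIdeal d f a c) = 1 := by
    rw [← ker_evalAt hP, (Ideal.quotientKerAlgEquivOfSurjective
      (evalAt_surjective hP)).toLinearEquiv.length_eq, Module.length_eq_one]
  have hlen := length_quotient_prime_pow K ptIdeal_ne_bot m (P := ptIdeal d f a c)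
  rw [hpt, mul_one, Module.length_eq_rank, Cardinal.toENat_eq_natCast] at hlen
  exact Module.finrank_eq_of_rank_eq hlen

theorem poleOrder_eq_of_ptIdeal_pow_eq_span [NeZero d] [IsDedekindDomain (CurveRing K d f)]
    (hcop : f.natDegree.Coprime d) (hf : f ≠ 0) (hP : c ^ d = f.eval a) {m : ℕ}
    {g : CurveRing K d f} (hg : ptIdeal d f a c ^ m = Ideal.span {g}) : poleOrder g = m := by
  have hg_ne : g ≠ 0 := by
    rw [Ne, ← Ideal.span_singleton_eq_bot, ← hg]
    exact pow_ne_zero m ptIdeal_ne_bot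
  rw [← natDegree_norm_eq_poleOrder hcop hf hg_ne,
    ← finrank_quotient_span_eq_natDegree_norm (F := K) (rootPowBasis d f) hg_ne, ← hg,
    finrank_quotient_ptIdeal_pow hP]

end PointIdeal

section SmallPoleOrder

variable {K : Type*} [Field K] {d : ℕ} [NeZero d] {f : K[X]} {g : CurveRing K d f}

theorem repr_eq_zero_of_poleOrder_le (hf : f.natDegree ≠ 0) (hg : poleOrder g ≤ f.natDegree)
    {i : Fin d} (hi : 1 < (i : ℕ)) : (rootPowBasis d f).repr g i = 0 := by
  by_contra hne
  have hlt : f.natDegree * 1 < f.natDegree * i := Nat.mul_lt_mul_of_pos_left hi (by omega)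
  have := (termOrder_le_poleOrder hne).trans hg
  rw [termOrder] at this
  omega

theorem eq_add_mul_root_of_poleOrder_le (hd : 1 < d) (hf : f.natDegree ≠ 0)
    (hg : poleOrder g ≤ f.natDegree) :
    g = AdjoinRoot.of _ ((rootPowBasis d f).repr g 0) +
      AdjoinRoot.of _ ((rootPowBasis d f).repr g ⟨1, hd⟩) * AdjoinRoot.root _ := by
  conv_lhs => rw [← (rootPowBasis d f).sum_repr g]
  rw [Finset.sum_eq_add 0 ⟨1, hd⟩ (by simp [Fin.ext_iff]) (fun i _ hi ↦ ?_) (by simp) (by simp)]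
  · simp [rootPowBasis_apply, Algebra.smul_def, AdjoinRoot.algebraMap_eq]
  · rw [repr_eq_zero_of_poleOrder_le hf hg, zero_smul]
    simp only [ne_eq, Fin.ext_iff, Fin.val_zero] at hi
    omega

theorem termOrder_one_eq_poleOrder (hd : 1 < d) (hf : f.natDegree ≠ 0)
    (hg : poleOrder g ≤ f.natDegree) (hdg : ¬ d ∣ poleOrder g) :
    (rootPowBasis d f).repr g ⟨1, hd⟩ ≠ 0 ∧ termOrder g ⟨1, hd⟩ = poleOrder g := by
  have hg_ne : g ≠ 0 := by
    rintro rfl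
    simp [poleOrder] at hdg
  obtain ⟨i, hi_ne, hi⟩ := exists_termOrder_eq_poleOrder hg_ne
  have hi_pos : (i : ℕ) ≠ 0 := fun h ↦ hdg ⟨_, by rw [← hi, termOrder, h, mul_zero, add_zero]⟩
  have hi_le : ¬ 1 < (i : ℕ) := fun h ↦ hi_ne (repr_eq_zero_of_poleOrder_le hf hg h)
  obtain rfl : i = ⟨1, hd⟩ := Fin.ext (by dsimp only; omega)
  exact ⟨hi_ne, hi⟩

theorem mul_natDegree_repr_zero_lt (hf : f.natDegree ≠ 0) (hg : poleOrder g ≤ f.natDegree)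
    (hdg : ¬ d ∣ poleOrder g) : d * ((rootPowBasis d f).repr g 0).natDegree < f.natDegree := by
  by_cases h0 : (rootPowBasis d f).repr g 0 = 0
  · simpa [h0] using Nat.pos_of_ne_zero hf
  · have hle := termOrder_le_poleOrder h0
    rw [termOrder, Fin.val_zero, mul_zero, add_zero] at hle
    exact (hle.lt_of_ne fun h ↦ hdg ⟨_, h.symm⟩).trans_le hg

omit [NeZero d] in
theorem span_add_C_mul_root {e : K} (he : e ≠ 0) (p : K[X]) :
    Ideal.span {(AdjoinRoot.of _ p + AdjoinRoot.of _ (C e) * AdjoinRoot.root _ : CurveRing K d f)} =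
      Ideal.span {AdjoinRoot.root _ - AdjoinRoot.of _ (-(C e⁻¹ * p))} := by
  have he_unit : IsUnit (AdjoinRoot.of ((X : K[X][X]) ^ d - C f) (C e)) :=
    (isUnit_C.2 he.isUnit).map _
  have he_mul : C e * (C e⁻¹ * p) = p := by
    rw [← mul_assoc, ← C_mul, mul_inv_cancel₀ he, C_1, one_mul]
  rw [← Ideal.span_singleton_mul_left_unit he_unit (AdjoinRoot.root _ - _), mul_sub, ← map_mul,
    mul_neg, he_mul, map_neg, sub_neg_eq_add, add_comm]

theorem exists_span_eq_span_root_sub (hd : 1 < d) (hf : f.natDegree ≠ 0)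
    (hg : poleOrder g ≤ f.natDegree) (hdg : ¬ d ∣ poleOrder g) :
    poleOrder g = f.natDegree ∧ ∃ v : K[X], d * v.natDegree < f.natDegree ∧
      Ideal.span {g} = Ideal.span {AdjoinRoot.root _ - AdjoinRoot.of _ v} := by
  obtain ⟨h1_ne, h1⟩ := termOrder_one_eq_poleOrder hd hf hg hdg
  have hdeg : d * ((rootPowBasis d f).repr g ⟨1, hd⟩).natDegree + f.natDegree = poleOrder g := by
    simpa only [termOrder, mul_one] using h1
  have hpole : poleOrder g = f.natDegree := by omega
  have hconst : d * ((rootPowBasis d f).repr g ⟨1, hd⟩).natDegree = 0 := by omega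
  obtain ⟨e, he⟩ := natDegree_eq_zero.1 ((mul_eq_zero.1 hconst).resolve_left (NeZero.ne d))
  have he_ne : e ≠ 0 := by
    rintro rfl
    exact h1_ne (by rw [← he, C_0])
  refine ⟨hpole, -(C e⁻¹ * (rootPowBasis d f).repr g 0), ?_, ?_⟩
  · rw [natDegree_neg, natDegree_C_mul (inv_ne_zero he_ne)]
    exact mul_natDegree_repr_zero_lt hf hg hdg
  · conv_lhs => rw [eq_add_mul_root_of_poleOrder_le hd hf hg, ← he]
    exact span_add_C_mul_root he_ne _

end SmallPoleOrder

theorem stmt_7_general {K : Type*} [Field K] {d : ℕ} (hd : 2 ≤ d) {f : K[X]}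
    [IsDedekindDomain (CurveRing K d f)] (hcop : f.natDegree.Coprime d) {a c : K}
    (hP : c ^ d = f.eval a) {m : ℕ} (hm : m ≤ f.natDegree) (hdm : ¬ d ∣ m)
    (hprin : (ptIdeal d f a c ^ m).IsPrincipal) :
    m = f.natDegree ∧ ∃ v : K[X], d * v.natDegree < f.natDegree ∧
      ptIdeal d f a c ^ m = Ideal.span {AdjoinRoot.root _ - AdjoinRoot.of _ v} := by
  have : NeZero d := ⟨by omega⟩
  have hf : f.natDegree ≠ 0 := fun h ↦ by
    rw [h, Nat.coprime_zero_left] at hcop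
    omega
  obtain ⟨g, hg⟩ := hprin
  obtain rfl := poleOrder_eq_of_ptIdeal_pow_eq_span hcop (ne_zero_of_natDegree_gt hf.bot_lt) hP hg
  rw [hg]
  exact exists_span_eq_span_root_sub hd hf hm hdm

theorem stmt_7 {K : Type*} [Field K] [IsAlgClosed K] (d n : ℕ)
    (hd : 2 ≤ d) (hdn : d < n) (hgcd : Nat.gcd n d = 1)
    (hchar : ¬ (ringChar K ∣ d))
    (f : K[X]) (hmonic : f.Monic) (hdeg : f.natDegree = n) (hsqf : Squarefree f)
    (hDed : IsDedekindDomain (CurveRing K d f))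
    (a c : K) (hP : c ^ d = f.eval a)
    (m : ℕ) (hm1 : 1 < m) (hmn : m ≤ n) (hdm : ¬ d ∣ m)
    (horder : IsTorsionOfOrder d f a c m) :
    m = n ∧
    ∃ v : K[X], d * v.natDegree ≤ n - 1 ∧
      ptIdeal d f a c ^ n =
        Ideal.span {AdjoinRoot.root ((X : K[X][X]) ^ d - C f) - AdjoinRoot.of _ v} := by
  subst hdeg
  obtain ⟨rfl, v, hv, hspan⟩ := stmt_7_general hd hgcd hP hmn hdm horder.1.2
  exact ⟨rfl, v, Nat.le_sub_one_of_lt hv, hspan⟩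
end
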